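/- For every natural number k there exists an abelian group G of cardinality ℶ_{k+1} which is ℵ_{k+1}-free, together with a non-zero element z ∈ G such that the cyclic subgroup ℤz generated by z is a pure subgroup of G but ℤz is not a direct summand of G (there is no subgroup H of G such that G is the internal direct sum of ℤz and H). -/

import Mathlib

open Cardinal

/-- A subgroup `H` of an abelian group `G` is pure if `H ∩ nG = nH` for every positive
integer `n`; equivalently, every element of `H` divisible by `n` in `G` is divisible by
`n` in `H`. -/
def IsPureAddSubgroup {G : Type*} [AddCommGroup G] (H : AddSubgroup G) : Prop :=
  ∀ n : ℕ, 0 < n → ∀ x ∈ H, (∃ y : G, n • y = x) → ∃ y ∈ H, n • y = x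


theorem li_crit {ι M : Type*} [AddCommGroup M] (b : ι → M)
    (h : ∀ s : Finset ι, s.Nonempty → ∃ i ∈ s, ∃ f : M →+ ℚ, f (b i) ≠ 0 ∧
      ∀ j ∈ s, j ≠ i → f (b j) = 0) : LinearIndependent ℤ b := by
  classical
  rw [linearIndependent_iff]
  intro l hl
  by_contra hne
  obtain ⟨i, hi, f, hf, hj⟩ := h l.support (by simpa [Finsupp.support_nonempty_iff] using hne)
  have h1 := congrArg f hl
  rw [Finsupp.linearCombination_apply, Finsupp.sum, map_sum, map_zero,
    Finset.sum_eq_single_of_mem i hi] at h1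
  · rw [map_zsmul, smul_eq_zero] at h1
    rcases h1 with h1 | h1
    · exact (Finsupp.mem_support_iff.1 hi) h1
    · exact hf h1
  · intro j hj1 hj2
    rw [map_zsmul, hj j hj1 hj2, smul_zero]

theorem sub_free_aux {ι : Type*} [LinearOrder ι] [WellFoundedLT ι] (N : Submodule ℤ (ι →₀ ℤ)) :
    Module.Free ℤ N := by
  classical
  let D : ι → Submodule ℤ (ι →₀ ℤ) := fun i =>
    N ⊓ Finsupp.supported ℤ ℤ (Set.Iic i)
  let I : ι → Submodule ℤ ℤ := fun i => (D i).map (Finsupp.lapply i)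
  have hgen : ∀ i, ∃ g ∈ D i, ∀ f ∈ D i, ∃ c : ℤ, f i = c * g i := by
    intro i
    have hp : (I i).IsPrincipal := IsPrincipalIdealRing.principal (I i)
    have hm := Submodule.IsPrincipal.generator_mem (I i)
    obtain ⟨g, hg, hg2⟩ := hm
    refine ⟨g, hg, fun f hf => ?_⟩
    have : f i ∈ I i := ⟨f, hf, rfl⟩
    obtain ⟨c, hc⟩ := (Submodule.IsPrincipal.mem_iff_eq_smul_generator (I i)).1 this
    refine ⟨c, ?_⟩
    rw [hc, ← hg2]; rfl
  choose g hgD hg using hgen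
  let S : Set ι := {i | g i i ≠ 0}
  let b : S → N := fun i => ⟨g i, (hgD i).1⟩
  have hsupp : ∀ i j, i < j → g i j = 0 := by
    intro i j hij
    by_contra hne
    have := (hgD i).2 (Finsupp.mem_support_iff.2 hne)
    exact absurd hij (not_lt.2 this)
  have hli : LinearIndependent ℤ b := by
    apply li_crit
    intro s hs
    refine ⟨s.max' hs, s.max'_mem hs, ?_⟩
    let i := s.max' hs
    let f : N →+ ℚ := (Int.castAddHom ℚ).comp
      ((Finsupp.applyAddHom (i : ι)).comp N.subtype.toAddMonoidHom)
    have hfa : ∀ x : N, f x = (((x : ι →₀ ℤ) (i : ι) : ℤ) : ℚ) := fun x => rfl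
    refine ⟨f, ?_, ?_⟩
    · rw [hfa]
      exact_mod_cast i.2
    · intro j hj hji
      rw [hfa]
      have : j < i := lt_of_le_of_ne (s.le_max' j hj) hji
      have := hsupp j i this
      exact_mod_cast this
  have hspan : ∀ i, ∀ f, ∀ hf : f ∈ D i, (⟨f, hf.1⟩ : N) ∈ Submodule.span ℤ (Set.range b) := by
    intro i
    induction i using WellFoundedLT.induction with
    | ind i ih =>
    intro f hf
    obtain ⟨c, hc⟩ := hg i f hf
    have hzero : ∀ f, ∀ hf : f ∈ D i, f i = 0 → (⟨f, hf.1⟩ : N) ∈ Submodule.span ℤ (Set.range b) := by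
      intro f hf h0
      by_cases hf0 : f = 0
      · subst hf0
        exact Submodule.zero_mem _
      · have hne : f.support.Nonempty := by simpa [Finsupp.support_nonempty_iff] using hf0
        have hm := f.support.max'_mem hne
        have hle : f.support.max' hne ≤ i := hf.2 hm
        have hlt : f.support.max' hne < i := by
          refine lt_of_le_of_ne hle ?_
          intro h
          rw [h] at hm
          exact Finsupp.mem_support_iff.1 hm h0
        exact ih _ hlt f ⟨hf.1, fun x hx => f.support.le_max' x hx⟩
    by_cases hS : g i i = 0
    · exact hzero f hf (by rw [hc, hS, mul_zero])
    · have h1 : f - c • g i ∈ D i := Submodule.sub_mem _ hf (Submodule.smul_mem _ _ (hgD i))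
      have h2 := hzero _ h1 (by simp [hc])
      have h3 : b ⟨i, hS⟩ ∈ Submodule.span ℤ (Set.range b) := Submodule.subset_span ⟨_, rfl⟩
      have h4 := Submodule.add_mem _ h2 (Submodule.smul_mem _ c h3)
      convert h4 using 1
      ext1
      simp [b]
  refine Module.Free.of_basis (Module.Basis.mk hli ?_)
  rintro ⟨f, hf⟩ -
  by_cases hf0 : f = 0
  · subst hf0
    exact Submodule.zero_mem _
  · have hne : f.support.Nonempty := by simpa [Finsupp.support_nonempty_iff] using hf0
    exact hspan (f.support.max' hne) f ⟨hf, fun x hx => f.support.le_max' x hx⟩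

theorem free_of_inj {M P : Type*} [AddCommGroup M] [AddCommGroup P] [Module.Free ℤ P]
    (f : M →+ P) (hf : Function.Injective f) : Module.Free ℤ M := by
  let b := Module.Free.chooseBasis ℤ P
  obtain ⟨_, _⟩ := exists_wellFoundedLT (Module.Free.ChooseBasisIndex ℤ P)
  let F : M →ₗ[ℤ] (Module.Free.ChooseBasisIndex ℤ P →₀ ℤ) := b.repr.toLinearMap ∘ₗ f.toIntLinearMap
  have hF : Function.Injective F := b.repr.injective.comp hf
  have := sub_free_aux (LinearMap.range F)
  exact Module.Free.of_equiv (LinearEquiv.ofInjective F hF).symm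

theorem comb {Λ X T : Type} (K : ℕ) (c : ℕ → Λ → X) (tr : ℕ → ℕ → Λ → T)
    (hinj : ∀ a b, (∀ j < K, c j a = c j b) → a = b)
    (h2 : ∀ l n a b, tr l n a = tr l n b → ∀ j < K, j ≠ l → c j a = c j b)
    (h3 : ∀ l < K, ∀ a b, a ≠ b → ∃ N, ∀ n ≥ N, tr l n a ≠ tr l n b) (m : ℕ) :
    ∀ (M : Set Λ), #M ≤ ℵ_ (m : Ordinal.{0}) → ∀ u : Λ → Finset ℕ,
      (∀ η ∈ M, u η ⊆ Finset.range K ∧ m < (u η).card) →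
      ∃ (ρ : Λ → Ordinal.{0}) (l N : Λ → ℕ), Set.InjOn ρ M ∧ ∀ η ∈ M, l η ∈ u η ∧
        ∀ ν ∈ M, ρ ν < ρ η → ∀ n ≥ N η, tr (l η) n ν ≠ tr (l η) n η := by
  classical
  induction m with
  | zero =>
    intro M hM u hu
    have hc : M.Countable := by
      rw [← Cardinal.le_aleph0_iff_set_countable]
      simpa using hM
    obtain ⟨f, hf⟩ := Set.countable_iff_exists_injOn.1 hc
    have hl : ∀ η, ∃ l, η ∈ M → l ∈ u η := by
      intro η
      by_cases h : η ∈ M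
      · obtain ⟨l, hl⟩ := Finset.card_pos.1 (hu η h).2
        exact ⟨l, fun _ => hl⟩
      · exact ⟨0, fun h' => absurd h' h⟩
    choose l hl using hl
    have hN : ∀ η, ∃ N, η ∈ M → ∀ ν ∈ M, f ν < f η → ∀ n ≥ N, tr (l η) n ν ≠ tr (l η) n η := by
      intro η
      by_cases h : η ∈ M
      swap
      · exact ⟨0, fun h' => absurd h' h⟩
      have hlK : l η < K := Finset.mem_range.1 ((hu η h).1 (hl η h))
      have hfin : {ν | ν ∈ M ∧ f ν < f η}.Finite := by
        apply Set.Finite.of_finite_image (f := f)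
        · apply (Set.finite_Iio (f η)).subset
          rintro _ ⟨ν, hν, rfl⟩
          exact hν.2
        · exact hf.mono (fun ν hν => hν.1)
      have hex : ∀ ν, ∃ N, ν ≠ η → ∀ n ≥ N, tr (l η) n ν ≠ tr (l η) n η := by
        intro ν
        by_cases hν : ν = η
        · exact ⟨0, fun h' => absurd hν h'⟩
        · obtain ⟨N, hN⟩ := h3 (l η) hlK ν η hν
          exact ⟨N, fun _ => hN⟩
      choose N hN using hex
      refine ⟨hfin.toFinset.sup N, fun _ ν hν hlt n hn => ?_⟩
      apply hN ν
      · rintro rfl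
        exact lt_irrefl _ hlt
      · exact le_trans (Finset.le_sup (f := N) (by simpa using ⟨hν, hlt⟩)) hn
    choose N hN using hN
    refine ⟨fun η => (f η : Ordinal), l, N, ?_, ?_⟩
    · intro a ha b hb hab
      exact hf ha hb (by simpa using hab)
    · intro η hη
      refine ⟨hl η hη, fun ν hν hlt => hN η hη ν hν (by simpa using hlt)⟩
  | succ m ih =>
    intro M hM u hu
    let C : Set X := ⋃ j : Fin K, c j '' M
    have hal : ℵ₀ ≤ ℵ_ ((m + 1 : ℕ) : Ordinal.{0}) := aleph0_le_aleph _
    have hC : #C ≤ ℵ_ ((m + 1 : ℕ) : Ordinal.{0}) := by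
      refine (mk_iUnion_le_sum_mk).trans ?_
      refine (Cardinal.sum_le_sum _ (fun _ => ℵ_ ((m + 1 : ℕ) : Ordinal.{0}))
        (fun j => mk_image_le.trans hM)).trans ?_
      rw [Cardinal.sum_const']
      refine Cardinal.mul_le_of_le hal ?_ le_rfl
      exact (Cardinal.mk_le_aleph0).trans hal
    obtain ⟨r, hrinj, hr⟩ : ∃ r : X → Ordinal.{0}, Set.InjOn r C ∧
        ∀ x ∈ C, r x < (ℵ_ ((m + 1 : ℕ) : Ordinal.{0})).ord := by
      have hC' : #C ≤ #(ℵ_ ((m + 1 : ℕ) : Ordinal.{0})).ord.ToType := by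
        simpa using hC
      obtain ⟨e⟩ := hC'
      refine ⟨fun x => if h : x ∈ C then (Ordinal.ToType.mk.symm (e ⟨x, h⟩)).1 else 0, ?_, ?_⟩
      · intro a ha b hb hab
        simp only [ha, hb, dif_pos] at hab
        have := Subtype.ext hab
        simpa using this
      · intro x hx
        simp only [hx, dif_pos]
        exact (Ordinal.ToType.mk.symm (e ⟨x, hx⟩)).2
    let ρ1 : Λ → Ordinal.{0} := fun η => (Finset.range K).sup (fun j => r (c j η))
    have hcC : ∀ η ∈ M, ∀ j < K, c j η ∈ C := fun η hη j hj =>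
      Set.mem_iUnion.2 ⟨⟨j, hj⟩, η, hη, rfl⟩
    have hrρ : ∀ η, ∀ j < K, r (c j η) ≤ ρ1 η := fun η j hj =>
      Finset.le_sup (f := fun j => r (c j η)) (Finset.mem_range.2 hj)
    let bad : Λ → ℕ → Prop := fun η l => ∀ N, ∃ n ≥ N, ∃ ν ∈ M, ρ1 ν < ρ1 η ∧ tr l n ν = tr l n η
    let u' : Λ → Finset ℕ := fun η => (u η).filter (fun l => ¬ bad η l)
    have hbad1 : ∀ η, ∀ l, bad η l → ∀ j < K, j ≠ l → r (c j η) < ρ1 η := by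
      intro η l hb j hj hjl
      obtain ⟨n, -, ν, hν, hlt, htr⟩ := hb 0
      rw [← h2 l n ν η htr j hj hjl]
      exact (hrρ ν j hj).trans_lt hlt
    have hbad2 : ∀ η, ∀ l l', bad η l → bad η l' → l = l' := by
      intro η l l' hb hb'
      by_contra hne
      have hall : ∀ j < K, r (c j η) < ρ1 η := by
        intro j hj
        by_cases h : j = l
        · exact hbad1 η l' hb' j hj (by rw [h]; exact hne)
        · exact hbad1 η l hb j hj h
      obtain ⟨_, -, ν, -, hlt, -⟩ := hb 0
      have hpos : ⊥ < ρ1 η := lt_of_le_of_lt bot_le hlt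
      have : ρ1 η < ρ1 η := (Finset.sup_lt_iff hpos).2 (fun j hj => hall j (Finset.mem_range.1 hj))
      exact lt_irrefl _ this
    have hlayer : ∀ α : Ordinal.{0}, #{η | η ∈ M ∧ ρ1 η = α} ≤ ℵ_ (m : Ordinal.{0}) := by
      intro α
      by_cases hα : α < (ℵ_ ((m + 1 : ℕ) : Ordinal.{0})).ord
      swap
      · have hem : {η | η ∈ M ∧ ρ1 η = α} = ∅ := by
          ext η
          simp only [Set.mem_ofPred_eq, Set.mem_empty_iff_false, iff_false]
          rintro ⟨hη, rfl⟩
          apply hα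
          refine (Finset.sup_lt_iff ?_).2 (fun j hj => hr _ (hcC η hη j (Finset.mem_range.1 hj)))
          rw [Ordinal.bot_eq_zero, Cardinal.lt_ord]
          simpa using (aleph0_pos.trans_le hal)
        rw [hem]; simp
      let Y : Set X := {x | x ∈ C ∧ r x ≤ α}
      have hY : #Y ≤ ℵ_ (m : Ordinal.{0}) := by
        have hα' : Order.succ α < (ℵ_ ((m + 1 : ℕ) : Ordinal.{0})).ord :=
          (Cardinal.isSuccLimit_ord hal).succ_lt hα
        have h1 : (Order.succ α).card ≤ ℵ_ (m : Ordinal.{0}) := by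
          rw [Cardinal.lt_ord] at hα'
          have h5 : ((m + 1 : ℕ) : Ordinal.{0}) = (m : Ordinal.{0}) + 1 := by simp
          rw [h5, ← succ_aleph] at hα'
          exact Order.lt_succ_iff.1 hα'
        refine le_trans ?_ h1
        rw [← Cardinal.mk_toType]
        refine ⟨⟨fun x => Ordinal.ToType.mk ⟨r x.1, Order.lt_succ_iff.2 x.2.2⟩, ?_⟩⟩
        intro a b hab
        have hab' := congrArg Subtype.val (Ordinal.ToType.mk.injective hab)
        exact Subtype.ext (hrinj a.2.1 b.2.1 hab')
      have h4 : #{η | η ∈ M ∧ ρ1 η = α} ≤ #(Fin K → Y) := by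
        refine ⟨⟨fun η j => ⟨c j η.1, hcC _ η.2.1 j j.2, (hrρ η.1 j j.2).trans η.2.2.le⟩, ?_⟩⟩
        intro a b hab
        apply Subtype.ext
        apply hinj
        intro j hj
        exact congrArg Subtype.val (congrFun hab ⟨j, hj⟩)
      refine h4.trans ?_
      rw [← Cardinal.power_def, Cardinal.mk_fin]
      refine (Cardinal.power_le_power_right hY).trans ?_
      exact Cardinal.power_nat_le (aleph0_le_aleph _)
    have hih := fun α => ih {η | η ∈ M ∧ ρ1 η = α} (hlayer α) u' (by
      rintro η ⟨hη, -⟩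
      refine ⟨(Finset.filter_subset _ _).trans (hu η hη).1, ?_⟩
      have h5 := Finset.card_filter_add_card_filter_not (s := u η) (fun l => bad η l)
      have h6 : ((u η).filter (fun l => bad η l)).card ≤ 1 := by
        rw [Finset.card_le_one]
        intro a ha b hb
        exact hbad2 η a b (Finset.mem_filter.1 ha).2 (Finset.mem_filter.1 hb).2
      have h7 := (hu η hη).2
      change m < ((u η).filter (fun l => ¬ bad η l)).card
      omega)
    choose ρ2 l N hinj2 hprop using hih
    have hNb : ∀ η, ∃ N', ∀ l, l ∈ u' η → ∀ n ≥ N', ∀ ν ∈ M, ρ1 ν < ρ1 η → tr l n ν ≠ tr l n η := by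
      intro η
      have : ∀ l, ∃ N', l ∈ u' η → ∀ n ≥ N', ∀ ν ∈ M, ρ1 ν < ρ1 η → tr l n ν ≠ tr l n η := by
        intro l
        by_cases hl : l ∈ u' η
        · have h8 := (Finset.mem_filter.1 hl).2
          simp only [bad, not_forall, not_exists, not_and] at h8
          obtain ⟨N', hN'⟩ := h8
          exact ⟨N', fun _ n hn ν hν hlt => hN' n hn ν hν hlt⟩
        · exact ⟨0, fun h => absurd h hl⟩
      choose N' hN' using this
      exact ⟨(u' η).sup N', fun l hl n hn => hN' l hl n ((Finset.le_sup (f := N') hl).trans hn)⟩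
    choose Nb hNb using hNb
    let F : M → Ordinal.{0} ×ₗ Ordinal.{0} := fun η => toLex (ρ1 η.1, ρ2 (ρ1 η.1) η.1)
    have hF : Function.Injective F := by
      intro a b hab
      have h9 := congrArg ofLex hab
      simp only [F, ofLex_toLex, Prod.mk.injEq] at h9
      obtain ⟨h91, h92⟩ := h9
      apply Subtype.ext
      refine hinj2 (ρ1 a.1) ⟨a.2, rfl⟩ ⟨b.2, h91.symm⟩ ?_
      rw [h92, h91]
    let rel : M → M → Prop := fun a b => F a < F b
    have hwo : IsWellOrder M rel :=
      (RelEmbedding.mk ⟨F, hF⟩ Iff.rfl : rel ↪r ((· < ·) : Ordinal.{0} ×ₗ Ordinal.{0} → _ → Prop)).isWellOrder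
    refine ⟨fun η => if h : η ∈ M then Ordinal.typein rel ⟨η, h⟩ else 0, fun η => l (ρ1 η) η,
      fun η => max (N (ρ1 η) η) (Nb η), ?_, ?_⟩
    · intro a ha b hb hab
      simp only [ha, hb, dif_pos] at hab
      exact congrArg Subtype.val (Ordinal.typein_injective rel hab)
    · intro η hη
      obtain ⟨hp1, hp2⟩ := hprop (ρ1 η) η ⟨hη, rfl⟩
      refine ⟨(Finset.mem_filter.1 hp1).1, ?_⟩
      intro ν hν hlt n hn
      simp only [hη, hν, dif_pos] at hlt
      rw [Ordinal.typein_lt_typein] at hlt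
      have hlt' : F ⟨ν, hν⟩ < F ⟨η, hη⟩ := hlt
      rw [Prod.Lex.lt_iff] at hlt'
      rcases hlt' with h | ⟨h, h'⟩
      · exact hNb η _ hp1 n ((le_max_right _ _).trans hn) ν hν h
      · simp only [F, ofLex_toLex] at h h'
        rw [h] at h'
        exact hp2 ν ⟨hν, h⟩ h' n ((le_max_left _ _).trans hn)

def LL : ℕ → Type
  | 0 => Unit
  | n + 1 => LL n × (ℕ → (LL n → ℤ))

def cutB {A : Type} (n : ℕ) (b : ℕ → (A → ℤ)) : ℕ → (A → ℤ) :=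
  fun m => if m < n then b m else 0

def trunc : (n : ℕ) → ℕ → ℕ → LL n → LL n
  | 0, _, _, a => a
  | n + 1, l, m, a => if l = n then (a.1, cutB m a.2) else (trunc n l m a.1, a.2)

def guess : (n : ℕ) → ℕ → ℕ → LL n → ℤ
  | 0, _, _, _ => 0
  | n + 1, l, m, a => if l = n then a.2 m a.1 else guess n l m a.1

def coor : (n : ℕ) → ℕ → LL n → (Σ j : ℕ, (ℕ → (LL j → ℤ)))
  | 0, _, _ => ⟨0, 0⟩
  | n + 1, j, a => if j = n then ⟨n, a.2⟩ else coor n j a.1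

theorem coor_inj (n : ℕ) : ∀ a b : LL n, (∀ j < n, coor n j a = coor n j b) → a = b := by
  induction n with
  | zero => intro a b _; exact Subsingleton.elim (α := Unit) a b
  | succ n ih =>
    rintro ⟨a, f⟩ ⟨b, g⟩ h
    have h1 := h n (Nat.lt_succ_self n)
    simp only [coor, if_true] at h1
    have h2 : f = g := by simpa using h1
    have h3 : a = b := by
      apply ih
      intro j hj
      have := h j (hj.trans (Nat.lt_succ_self n))
      simpa [coor, hj.ne] using this
    rw [h2, h3]

theorem trunc_top {n l m : ℕ} (hl : l = n) {a b : LL n} {f g : ℕ → (LL n → ℤ)}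
    (h : trunc (n + 1) l m (a, f) = trunc (n + 1) l m (b, g)) : a = b ∧ cutB m f = cutB m g := by
  have h' : ((a, cutB m f) : LL n × (ℕ → (LL n → ℤ))) = (b, cutB m g) := by
    have e : ∀ (a : LL n) (f : ℕ → (LL n → ℤ)), trunc (n + 1) l m (a, f) = (a, cutB m f) :=
      fun a f => if_pos hl
    exact (e a f).symm.trans (h.trans (e b g))
  exact Prod.mk.inj h'

theorem trunc_low {n l m : ℕ} (hl : ¬ l = n) {a b : LL n} {f g : ℕ → (LL n → ℤ)}
    (h : trunc (n + 1) l m (a, f) = trunc (n + 1) l m (b, g)) :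
    trunc n l m a = trunc n l m b ∧ f = g := by
  have h' : ((trunc n l m a, f) : LL n × (ℕ → (LL n → ℤ))) = (trunc n l m b, g) := by
    have e : ∀ (a : LL n) (f : ℕ → (LL n → ℤ)), trunc (n + 1) l m (a, f) = (trunc n l m a, f) :=
      fun a f => if_neg hl
    exact (e a f).symm.trans (h.trans (e b g))
  exact Prod.mk.inj h'

theorem trunc_coor (n : ℕ) : ∀ l m (a b : LL n), trunc n l m a = trunc n l m b →
    ∀ j < n, j ≠ l → coor n j a = coor n j b := by
  induction n with
  | zero => intro l m a b _ j hj; omega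
  | succ n ih =>
    rintro l m ⟨a, f⟩ ⟨b, g⟩ h j hj hjl
    by_cases hl : l = n
    · replace h := trunc_top hl h
      simp only [coor]
      rw [if_neg (by omega), if_neg (by omega), h.1]
    · replace h := trunc_low hl h
      simp only [coor]
      by_cases hjn : j = n
      · rw [if_pos hjn, if_pos hjn, h.2]
      · rw [if_neg hjn, if_neg hjn]
        exact ih l m a b h.1 j (by omega) hjl

theorem trunc_ne (n : ℕ) : ∀ l < n, ∀ a b : LL n, a ≠ b →
    ∃ N, ∀ m ≥ N, trunc n l m a ≠ trunc n l m b := by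
  induction n with
  | zero => intro l hl; omega
  | succ n ih =>
    rintro l hl ⟨a, f⟩ ⟨b, g⟩ hab
    by_cases hl' : l = n
    · by_cases h1 : a = b
      · have h2 : f ≠ g := by
          rintro rfl
          exact hab (by rw [h1])
        obtain ⟨i, hi⟩ := Function.ne_iff.1 h2
        refine ⟨i + 1, fun m hm h => hi ?_⟩
        replace h := trunc_top hl' h
        have := congrFun h.2 i
        simpa [cutB, show i < m by omega] using this
      · refine ⟨0, fun m _ h => h1 ?_⟩
        replace h := trunc_top hl' h
        exact h.1
    · by_cases h1 : a = b
      · refine ⟨0, fun m _ h => hab ?_⟩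
        replace h := trunc_low hl' h
        rw [h1, h.2]
      · obtain ⟨N, hN⟩ := ih l (by omega) a b h1
        refine ⟨N, fun m hm h => hN m hm ?_⟩
        replace h := trunc_low hl' h
        exact h.1

theorem bb_seq {A : Type} (F : ℕ → (ℕ → (A → ℤ)) → (A → ℤ)) :
    ∃ b : ℕ → (A → ℤ), ∀ m, b m = F m (cutB m b) := by
  let b : ℕ → (A → ℤ) := fun m => Nat.strongRecOn m (fun m ih =>
    F m (fun i => if h : i < m then ih i h else 0))
  refine ⟨b, fun m => ?_⟩
  change (Nat.strongRecOn m (fun m ih =>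
    F m (fun i => if h : i < m then ih i h else 0)) : A → ℤ) = _
  rw [Nat.strongRecOn_eq]
  rfl

theorem bb (n : ℕ) : ∀ h : ℕ → ℕ → LL n → ℤ, ∃ η : LL n, ∀ l < n, ∀ m,
    h l m (trunc n l m η) = guess n l m η := by
  induction n with
  | zero => intro h; exact ⟨(), fun l hl => by omega⟩
  | succ n ih =>
    intro h
    obtain ⟨b, hb⟩ := bb_seq (A := LL n) (fun m f a => h n m (a, f))
    obtain ⟨a, ha⟩ := ih (fun l m a => h l m (a, b))
    refine ⟨(a, b), fun l hl m => ?_⟩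
    by_cases hln : l = n
    · subst hln
      simp only [trunc, guess, if_true]
      exact (congrFun (hb m) a).symm
    · simp only [trunc, guess, hln, if_false]
      exact ha l (by omega) m

instance LL_ne (n : ℕ) : Nonempty (LL n) := by
  induction n with
  | zero => exact ⟨()⟩
  | succ n ih => exact ⟨(ih.some, 0)⟩

theorem card_LL_mul (n : ℕ) : #(LL n) * ℵ₀ = beth (n : Ordinal.{0}) ∧
    #(LL (n + 1)) = beth ((n : Ordinal.{0}) + 1) := by
  have key : ∀ n : ℕ, #(LL n) * ℵ₀ = beth (n : Ordinal.{0}) →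
      #(LL (n + 1)) = beth ((n : Ordinal.{0}) + 1) := by
    intro n hn
    have h1 : #(LL (n + 1)) = #(LL n) * #(ℕ → LL n → ℤ) := by
      change #(LL n × (ℕ → LL n → ℤ)) = _
      simp
    have h2 : #(ℕ → LL n → ℤ) = 2 ^ beth (n : Ordinal.{0}) := by
      rw [← Cardinal.power_def, ← Cardinal.power_def, ← Cardinal.power_mul]
      simp only [Cardinal.mk_int, Cardinal.mk_nat]
      rw [hn]
      exact Cardinal.power_eq_two_power (aleph0_le_beth _) (by exact (natCast_lt_aleph0 (n := 2)).le) (aleph0_le_beth _)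
    rw [h1, h2, beth_add_one]
    apply Cardinal.mul_eq_right
    · exact (aleph0_le_beth _).trans (cantor _).le
    · refine le_trans ?_ (cantor _).le
      rw [← hn]
      exact Cardinal.le_mul_right aleph0_ne_zero
    · exact Cardinal.mk_ne_zero _
  induction n with
  | zero =>
    have : #(LL 0) * ℵ₀ = beth ((0 : ℕ) : Ordinal.{0}) := by
      have : #(LL 0) = 1 := Cardinal.mk_unit
      simp [this]
    exact ⟨this, key 0 this⟩
  | succ n ih =>
    have : #(LL (n + 1)) * ℵ₀ = beth ((n + 1 : ℕ) : Ordinal.{0}) := by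
      rw [ih.2]
      push_cast
      exact Cardinal.mul_aleph0_eq (aleph0_le_beth _)
    exact ⟨this, key _ this⟩
inductive Idx (Λ : Type) : Type
  | z : Idx Λ
  | x (l n : ℕ) (t : Λ) : Idx Λ
  | e (η : Λ) : Idx Λ

noncomputable section GroupSec

def zz (Λ : Type) : Idx Λ →₀ ℚ := Finsupp.single Idx.z 1
def xx {Λ : Type} (l n : ℕ) (t : Λ) : Idx Λ →₀ ℚ := Finsupp.single (Idx.x l n t) 1
def ee {Λ : Type} (η : Λ) : Idx Λ →₀ ℚ := Finsupp.single (Idx.e η) 1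

def ss {Λ : Type} (K : ℕ) (tr : ℕ → ℕ → Λ → Λ) (a : Λ → ℕ → ℤ) (η : Λ) (m : ℕ) : Idx Λ →₀ ℚ :=
  (∑ l ∈ Finset.range K, xx l m (tr l m η)) + a η m • zz Λ

def yy {Λ : Type} (K : ℕ) (tr : ℕ → ℕ → Λ → Λ) (a : Λ → ℕ → ℤ) (η : Λ) : ℕ → (Idx Λ →₀ ℚ)
  | 0 => ee η
  | n + 1 => (3 : ℚ)⁻¹ • (yy K tr a η n + ss K tr a η n)

variable {Λ : Type} {K : ℕ} {tr : ℕ → ℕ → Λ → Λ} {a : Λ → ℕ → ℤ}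

theorem yy_rel (η : Λ) (n : ℕ) :
    (3 : ℤ) • yy K tr a η (n + 1) = yy K tr a η n + ss K tr a η n := by
  rw [← Int.cast_smul_eq_zsmul ℚ]
  simp [yy, smul_smul]

theorem ss_e (η ν : Λ) (n : ℕ) : ss K tr a η n (Idx.e ν) = 0 := by
  simp [ss, xx, zz, Finsupp.finsetSum_apply]

theorem yy_e_ne {η ν : Λ} (h : η ≠ ν) (n : ℕ) : yy K tr a η n (Idx.e ν) = 0 := by
  induction n with
  | zero => simp [yy, ee, Finsupp.single_apply, h]
  | succ n ih => simp [yy, ih, ss_e]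

theorem yy_e_self (η : Λ) (n : ℕ) : yy K tr a η n (Idx.e η) ≠ 0 := by
  induction n with
  | zero => simp [yy, ee]
  | succ n ih => simp [yy, ih, ss_e]

theorem ss_x_zero {η t : Λ} {l m n : ℕ} (h : n = m → tr l m η ≠ t) :
    ss K tr a η n (Idx.x l m t) = 0 := by
  classical
  simp only [ss, xx, zz, Finsupp.add_apply, Finsupp.finsetSum_apply, Finsupp.smul_apply]
  rw [Finset.sum_eq_zero]
  · simp [Finsupp.single_apply]
  · intro j _
    rw [Finsupp.single_apply, if_neg]
    intro h'
    injection h' with h1 h2 h3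
    subst h1 h2
    exact h rfl h3

theorem yy_x_lt {η t : Λ} {l m : ℕ} (n : ℕ) (h : n ≤ m) :
    yy K tr a η n (Idx.x l m t) = 0 := by
  induction n with
  | zero => simp [yy, ee]
  | succ n ih =>
    simp [yy, ih (by omega), ss_x_zero (K := K) (tr := tr) (a := a) (η := η) (t := t) (l := l)
      (m := m) (n := n) (by omega)]

theorem yy_x_ne {η t : Λ} {l m : ℕ} (n : ℕ) (h : tr l m η ≠ t) :
    yy K tr a η n (Idx.x l m t) = 0 := by
  induction n with
  | zero => simp [yy, ee]
  | succ n ih =>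
    simp [yy, ih, ss_x_zero (K := K) (tr := tr) (a := a) (η := η) (t := t) (l := l)
      (m := m) (n := n) (fun _ => h)]

theorem yy_x_self {η : Λ} {l m : ℕ} (hl : l < K) :
    yy K tr a η (m + 1) (Idx.x l m (tr l m η)) ≠ 0 := by
  classical
  have h1 : ss K tr a η m (Idx.x l m (tr l m η)) = 1 := by
    simp only [ss, xx, zz, Finsupp.add_apply, Finsupp.finsetSum_apply, Finsupp.smul_apply]
    rw [Finset.sum_eq_single_of_mem l (Finset.mem_range.2 hl)]
    · simp [Finsupp.single_apply]
    · intro j _ hj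
      rw [Finsupp.single_apply, if_neg]
      intro h'
      injection h' with h1 h2 h3
      exact hj h1
  simp [yy, yy_x_lt, h1]

def GM (K : ℕ) (tr : ℕ → ℕ → Λ → Λ) (a : Λ → ℕ → ℤ) (M : Set Λ) : Submodule ℤ (Idx Λ →₀ ℚ) :=
  Submodule.span ℤ ({zz Λ} ∪ {v | ∃ l n t, v = xx l n t} ∪ {v | ∃ η ∈ M, ∃ n, v = yy K tr a η n})

theorem zz_mem (M : Set Λ) : zz Λ ∈ GM K tr a M := Submodule.subset_span (Or.inl (Or.inl rfl))
theorem xx_mem (M : Set Λ) (l n : ℕ) (t : Λ) : xx l n t ∈ GM K tr a M :=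
  Submodule.subset_span (Or.inl (Or.inr ⟨l, n, t, rfl⟩))
theorem yy_mem {M : Set Λ} {η : Λ} (h : η ∈ M) (n : ℕ) : yy K tr a η n ∈ GM K tr a M :=
  Submodule.subset_span (Or.inr ⟨η, h, n, rfl⟩)

theorem GM_le {M : Set Λ} {S : Submodule ℤ (Idx Λ →₀ ℚ)} (h1 : zz Λ ∈ S)
    (h2 : ∀ l n t, xx l n t ∈ S) (h3 : ∀ η ∈ M, ∀ n, yy K tr a η n ∈ S) : GM K tr a M ≤ S := by
  refine Submodule.span_le.2 ?_
  rintro v ((hv | ⟨l, n, t, rfl⟩) | ⟨η, hη, n, rfl⟩)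
  · rw [Set.mem_singleton_iff] at hv
    rw [hv]; exact h1
  · exact h2 l n t
  · exact h3 η hη n

theorem GM_mono {M M' : Set Λ} (h : M ⊆ M') : GM K tr a M ≤ GM K tr a M' :=
  GM_le (zz_mem _) (xx_mem _) (fun _ hη n => yy_mem (h hη) n)

theorem GM_fin {g : Idx Λ →₀ ℚ} (hg : g ∈ GM K tr a Set.univ) :
    ∃ F : Finset Λ, g ∈ GM K tr a (F : Set Λ) := by
  classical
  unfold GM at hg
  induction hg using Submodule.span_induction with
  | mem v hv =>
    rcases hv with (hv | ⟨l, n, t, rfl⟩) | ⟨η, hη, n, rfl⟩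
    · rw [Set.mem_singleton_iff] at hv
      rw [hv]; exact ⟨∅, zz_mem _⟩
    · exact ⟨∅, xx_mem _ _ _ _⟩
    · exact ⟨{η}, yy_mem (by simp) n⟩
  | zero => exact ⟨∅, Submodule.zero_mem _⟩
  | add u v _ _ hu hv =>
    obtain ⟨F, hF⟩ := hu
    obtain ⟨F', hF'⟩ := hv
    refine ⟨F ∪ F', Submodule.add_mem _ (GM_mono ?_ hF) (GM_mono ?_ hF')⟩ <;> simp
  | smul c v _ hv =>
    obtain ⟨F, hF⟩ := hv
    exact ⟨F, Submodule.smul_mem _ _ hF⟩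

theorem GM_basis (M : Set Λ) (ρ : Λ → Ordinal.{0}) (l N : Λ → ℕ) (hρ : Set.InjOn ρ M)
    (hl : ∀ η ∈ M, l η < K)
    (hN : ∀ η ∈ M, ∀ ν ∈ M, ρ ν < ρ η → ∀ n ≥ N η, tr (l η) n ν ≠ tr (l η) n η) :
    ∃ (ι : Type) (b : Module.Basis ι ℤ (GM K tr a M)) (i : ι), (b i : Idx Λ →₀ ℚ) = zz Λ := by
  classical
  let U : Set (ℕ × ℕ × Λ) :=
    {p | ∃ η ∈ M, p.1 = l η ∧ N η ≤ p.2.1 ∧ p.2.2 = tr (l η) p.2.1 η}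
  let v : Unit ⊕ ({p : ℕ × ℕ × Λ // p ∉ U} ⊕ (M × ℕ)) → (Idx Λ →₀ ℚ) := fun i =>
    match i with
    | Sum.inl _ => zz Λ
    | Sum.inr (Sum.inl p) => xx p.1.1 p.1.2.1 p.1.2.2
    | Sum.inr (Sum.inr q) => yy K tr a q.1 (N q.1 + q.2)
  have hli : LinearIndependent ℤ v := by
    apply li_crit
    intro s hs
    by_cases hy : ∃ q : M × ℕ, Sum.inr (Sum.inr q) ∈ s
    · obtain ⟨s', hmem⟩ : ∃ s' : Finset (M × ℕ), ∀ q, q ∈ s' ↔ Sum.inr (Sum.inr q) ∈ s :=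
        ⟨s.preimage (fun q => Sum.inr (Sum.inr q))
          (Sum.inr_injective.comp Sum.inr_injective).injOn, fun q => Finset.mem_preimage⟩
      have hs' : s'.Nonempty := by
        obtain ⟨q, hq⟩ := hy
        exact ⟨q, (hmem _).2 hq⟩
      obtain ⟨⟨η, i⟩, hq, hmax⟩ := Finset.exists_max_image s'
        (fun q => (toLex (ρ q.1.1, q.2) : Ordinal.{0} ×ₗ ℕ)) hs'
      have hqs : Sum.inr (Sum.inr (η, i)) ∈ s := (hmem _).1 hq
      have hcase : ∀ ν j, Sum.inr (Sum.inr (ν, j)) ∈ s → (ν, j) ≠ (η, i) →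
          (ν = η ∧ j < i) ∨ (ν.1 ≠ η.1 ∧ ρ ν.1 < ρ η.1) := by
        intro ν j hm hne
        have h1 := hmax (ν, j) ((hmem _).2 hm)
        rw [Prod.Lex.le_iff] at h1
        simp only [ofLex_toLex] at h1
        rcases h1 with h1 | ⟨h1, h2⟩
        · refine Or.inr ⟨?_, h1⟩
          intro h
          rw [h] at h1
          exact lt_irrefl _ h1
        · have h3 : ν = η := Subtype.ext (hρ ν.2 η.2 h1)
          refine Or.inl ⟨h3, lt_of_le_of_ne h2 ?_⟩
          rintro rfl
          exact hne (by rw [h3])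
      refine ⟨_, hqs, ?_⟩
      rcases i with _ | i
      · refine ⟨Finsupp.applyAddHom (Idx.e η.1), yy_e_self _ _, ?_⟩
        rintro (_ | p | ⟨ν, j⟩) hj hne
        · simp [v, zz]
        · simp [v, xx]
        · rcases hcase ν j hj (fun h => hne (by rw [h])) with ⟨_, h⟩ | ⟨h, _⟩
          · omega
          · exact yy_e_ne h _
      · refine ⟨Finsupp.applyAddHom (Idx.x (l η.1) (N η.1 + i) (tr (l η.1) (N η.1 + i) η.1)),
          yy_x_self (hl _ η.2), ?_⟩
        rintro (_ | p | ⟨ν, j⟩) hj hne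
        · simp [v, zz]
        · change xx p.1.1 p.1.2.1 p.1.2.2 _ = 0
          rw [xx, Finsupp.single_apply, if_neg]
          intro h
          injection h with h1 h2 h3
          refine p.2 ⟨η.1, η.2, h1, ?_, ?_⟩
          · rw [h2]; omega
          · rw [h3, h2]
        · rcases hcase ν j hj (fun h => hne (by rw [h])) with ⟨rfl, h⟩ | ⟨_, h⟩
          · exact yy_x_lt _ (by dsimp only; omega)
          · exact yy_x_ne _ (hN η.1 η.2 ν.1 ν.2 h _ (by omega))
    · obtain ⟨i, hi⟩ := hs
      refine ⟨i, hi, ?_⟩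
      rcases i with _ | p | q
      · refine ⟨Finsupp.applyAddHom Idx.z, by simp [v, zz], ?_⟩
        rintro (_ | p | q) hj hne
        · exact absurd rfl hne
        · simp [v, xx]
        · exact absurd ⟨q, hj⟩ hy
      · refine ⟨Finsupp.applyAddHom (Idx.x p.1.1 p.1.2.1 p.1.2.2), by simp [v, xx], ?_⟩
        rintro (_ | p' | q) hj hne
        · simp [v, zz]
        · change xx p'.1.1 p'.1.2.1 p'.1.2.2 _ = 0
          rw [xx, Finsupp.single_apply, if_neg]
          intro h
          injection h with h1 h2 h3
          apply hne
          have : p' = p := Subtype.ext (Prod.ext h1 (Prod.ext h2 h3))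
          rw [this]
        · exact absurd ⟨q, hj⟩ hy
      · exact absurd ⟨q, hi⟩ hy
  have hspan : Submodule.span ℤ (Set.range v) = GM K tr a M := by
    apply le_antisymm
    · refine Submodule.span_le.2 ?_
      rintro _ ⟨(_ | p | q), rfl⟩
      · exact zz_mem _
      · exact xx_mem _ _ _ _
      · exact yy_mem q.1.2 _
    · set S := Submodule.span ℤ (Set.range v) with hS
      have hz : zz Λ ∈ S := Submodule.subset_span ⟨Sum.inl (), rfl⟩
      have hxU : ∀ p : ℕ × ℕ × Λ, p ∉ U → xx p.1 p.2.1 p.2.2 ∈ S := fun p hp =>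
        Submodule.subset_span ⟨Sum.inr (Sum.inl ⟨p, hp⟩), rfl⟩
      have hyN : ∀ η ∈ M, ∀ n ≥ N η, yy K tr a η n ∈ S := by
        intro η hη n hn
        refine Submodule.subset_span ⟨Sum.inr (Sum.inr (⟨η, hη⟩, n - N η)), ?_⟩
        change yy K tr a η (N η + (n - N η)) = _
        rw [Nat.add_sub_cancel' hn]
      have key : ∀ o : Ordinal.{0}, ∀ η ∈ M, ρ η = o → ∀ n ≥ N η,
          xx (l η) n (tr (l η) n η) ∈ S := by
        intro o
        induction o using WellFoundedLT.induction with
        | ind o ih =>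
        rintro η hη rfl n hn
        have h1 := yy_rel (K := K) (tr := tr) (a := a) η n
        rw [ss, ← Finset.add_sum_erase _ _ (Finset.mem_range.2 (hl η hη))] at h1
        have h2 : xx (l η) n (tr (l η) n η) = (3 : ℤ) • yy K tr a η (n + 1) - yy K tr a η n
            - (∑ j ∈ (Finset.range K).erase (l η), xx j n (tr j n η)) - a η n • zz Λ := by
          rw [h1]; abel
        rw [h2]
        refine Submodule.sub_mem _ (Submodule.sub_mem _ (Submodule.sub_mem _
          (Submodule.smul_mem _ _ (hyN η hη _ (by omega))) (hyN η hη _ hn)) ?_)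
          (Submodule.smul_mem _ _ hz)
        refine Submodule.sum_mem _ ?_
        intro j hj
        have hjl := Finset.ne_of_mem_erase hj
        by_cases hU : (j, n, tr j n η) ∈ U
        · obtain ⟨ν, hν, h3, h4, h5⟩ := hU
          simp only at h3 h4 h5
          have hlt : ρ ν < ρ η := by
            rcases lt_trichotomy (ρ ν) (ρ η) with h | h | h
            · exact h
            · have := hρ hν hη h
              subst this
              exact absurd h3 hjl
            · exact absurd (h3 ▸ h5) (hN ν hν η hη h n h4)
          rw [h5, h3]
          exact ih (ρ ν) hlt ν hν rfl n h4
        · exact hxU _ hU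
      have hx : ∀ j n t, xx j n t ∈ S := by
        intro j n t
        by_cases hU : (j, n, t) ∈ U
        · obtain ⟨ν, hν, h3, h4, h5⟩ := hU
          simp only at h3 h4 h5
          rw [h5, h3]
          exact key _ ν hν rfl n h4
        · exact hxU _ hU
      have hss : ∀ η n, ss K tr a η n ∈ S := fun η n =>
        Submodule.add_mem _ (Submodule.sum_mem _ (fun j _ => hx _ _ _)) (Submodule.smul_mem _ _ hz)
      refine GM_le hz hx ?_
      intro η hη
      have : ∀ d n, N η ≤ n + d → yy K tr a η n ∈ S := by
        intro d
        induction d with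
        | zero => intro n hn; exact hyN η hη n hn
        | succ d ih =>
          intro n hn
          have h1 := yy_rel (K := K) (tr := tr) (a := a) η n
          rw [eq_sub_of_add_eq h1.symm]
          exact Submodule.sub_mem _ (Submodule.smul_mem _ _ (ih (n + 1) (by omega))) (hss _ _)
      exact fun n => this (N η) n (by omega)
  refine ⟨_, (Module.Basis.span hli).map (LinearEquiv.ofEq _ _ hspan), Sum.inl (), ?_⟩
  simp [Module.Basis.span_apply, v]

end GroupSec

theorem free_sub {V : Type} [AddCommGroup V] {A B : Submodule ℤ V} [Module.Free ℤ B]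
    (H : AddSubgroup A) (h : ∀ x : H, ((x : A) : V) ∈ B) : Module.Free ℤ H := by
  let f : H →+ B := AddMonoidHom.mk' (fun x => ⟨((x : A) : V), h x⟩) (fun u v => rfl)
  refine free_of_inj f ?_
  intro u v huv
  have h5 : ((u : A) : V) = ((v : A) : V) := congrArg (fun w : B => (w : V)) huv
  exact Subtype.ext (Subtype.ext h5)

theorem no_seq (b : ℕ → ℤ) (h : ∀ n, 3 * b (n + 1) = b n + 1) : False := by
  have h1 : ∀ n, 2 * b 0 - 1 = 3 ^ n * (2 * b n - 1) := by
    intro n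
    induction n with
    | zero => simp
    | succ n ih =>
      rw [ih, pow_succ]
      have : 2 * b n - 1 = 3 * (2 * b (n + 1) - 1) := by linarith [h n]
      rw [this]; ring
  have h2 : 2 * b 0 - 1 = 0 := by
    by_contra hne
    obtain ⟨n, hn⟩ : ∃ n : ℕ, (2 * b 0 - 1).natAbs < 3 ^ n :=
      ⟨_, Nat.lt_pow_self (by norm_num)⟩
    have hd : ((3 ^ n : ℕ) : ℤ) ∣ 2 * b 0 - 1 := ⟨2 * b n - 1, by push_cast; exact h1 n⟩
    have := Int.natAbs_dvd_natAbs.2 hd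
    have h3 := Nat.le_of_dvd (Int.natAbs_pos.2 hne) this
    simp only [Int.natAbs_natCast] at h3
    omega
  omega

theorem exists_proj {G : Type} [AddCommGroup G] (z : G) (hz : ∀ n : ℤ, n • z = 0 → n = 0)
    (H : AddSubgroup G) (hc : IsCompl (AddSubgroup.zmultiples z) H) :
    ∃ f : G →+ ℤ, f z = 1 := by
  have hex : ∀ g : G, ∃ n : ℤ, g - n • z ∈ H := by
    intro g
    have : g ∈ AddSubgroup.zmultiples z ⊔ H := by rw [hc.sup_eq_top]; trivial
    obtain ⟨y, hy, w, hw, rfl⟩ := AddSubgroup.mem_sup.1 this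
    obtain ⟨n, rfl⟩ := AddSubgroup.mem_zmultiples_iff.1 hy
    exact ⟨n, by simpa using hw⟩
  have huniq : ∀ n : ℤ, n • z ∈ H → n = 0 := by
    intro n hn
    apply hz
    have : n • z ∈ AddSubgroup.zmultiples z ⊓ H := ⟨AddSubgroup.mem_zmultiples_iff.2 ⟨n, rfl⟩, hn⟩
    rw [hc.inf_eq_bot] at this
    exact this
  choose f hf using hex
  refine ⟨AddMonoidHom.mk' f ?_, ?_⟩
  · intro u v
    have h1 := H.sub_mem (H.add_mem (hf u) (hf v)) (hf (u + v))
    have h2 : u - f u • z + (v - f v • z) - (u + v - f (u + v) • z)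
        = (f (u + v) - (f u + f v)) • z := by
      rw [sub_smul, add_smul]; abel
    rw [h2] at h1
    linarith [huniq _ h1]
  · change f z = 1
    have h2 : z - f z • z = (1 - f z) • z := by rw [sub_smul, one_smul]
    have h1 := hf z
    rw [h2] at h1
    linarith [huniq _ h1]

theorem card_Idx (Λ : Type) [Infinite Λ] : #(Idx Λ →₀ ℚ) = #Λ := by
  have hinf : ℵ₀ ≤ #Λ := Cardinal.infinite_iff.1 inferInstance
  let e : Idx Λ → Unit ⊕ ((ℕ × ℕ × Λ) ⊕ Λ) := fun i =>
    match i with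
    | Idx.z => Sum.inl ()
    | Idx.x l n t => Sum.inr (Sum.inl (l, n, t))
    | Idx.e η => Sum.inr (Sum.inr η)
  have he : Function.Injective e := by
    rintro (_ | _ | _) (_ | _ | _) h <;> simp_all [e]
  have h1 : #(Idx Λ) ≤ #Λ := by
    refine (Cardinal.mk_le_of_injective he).trans ?_
    simp only [Cardinal.mk_sum, Cardinal.mk_prod, Cardinal.lift_id, Cardinal.mk_nat,
      Cardinal.mk_unit]
    rw [Cardinal.aleph0_mul_eq hinf, Cardinal.aleph0_mul_eq hinf, Cardinal.add_eq_self hinf]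
    exact Cardinal.add_le_of_le hinf ((Cardinal.one_lt_aleph0).le.trans hinf) le_rfl
  have hei : Function.Injective (Idx.e : Λ → Idx Λ) := fun a b h => by injection h
  have h2 : #Λ ≤ #(Idx Λ) := Cardinal.mk_le_of_injective hei
  have : Infinite (Idx Λ) := Infinite.of_injective _ hei
  rw [Cardinal.mk_finsupp_of_infinite, le_antisymm h1 h2]
  simp

theorem comb_LL (k : ℕ) (a : LL (k + 1) → ℕ → ℤ) (M : Set (LL (k + 1)))
    (hM : #M ≤ ℵ_ (k : Ordinal.{0})) :
    ∃ (ι : Type) (b : Module.Basis ι ℤ (GM (k + 1) (trunc (k + 1)) a M)) (i : ι),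
      (b i : Idx (LL (k + 1)) →₀ ℚ) = zz (LL (k + 1)) := by
  obtain ⟨ρ, l, N, hρ, h⟩ := comb (k + 1) (coor (k + 1)) (trunc (k + 1)) (coor_inj _)
    (trunc_coor _) (trunc_ne _) k M hM (fun _ => Finset.range (k + 1)) (by simp)
  exact GM_basis M ρ l N hρ (fun η hη => Finset.mem_range.1 (h η hη).1) (fun η hη => (h η hη).2)

theorem stmt1 (k : ℕ) :
    ∃ (G : Type) (_ : AddCommGroup G) (z : G),
      #G = Cardinal.beth (k + 1) ∧
      (∀ H : AddSubgroup G, #H < Cardinal.aleph (k + 1) → Module.Free ℤ H) ∧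
      z ≠ 0 ∧
      IsPureAddSubgroup (AddSubgroup.zmultiples z) ∧
      ¬ ∃ H : AddSubgroup G, IsCompl (AddSubgroup.zmultiples z) H := by
  classical
  let Λ := LL (k + 1)
  let tr := trunc (k + 1)
  let a : Λ → ℕ → ℤ := fun η m => 1 - ∑ l ∈ Finset.range (k + 1), guess (k + 1) l m η
  let G := GM (k + 1) tr a Set.univ
  let z : G := ⟨zz Λ, zz_mem _⟩
  have hz : ∀ n : ℤ, n • z = 0 → n = 0 := by
    intro n hn
    have h1 := congrArg (fun g : G => (g : Idx Λ →₀ ℚ) Idx.z) hn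
    simpa [z, zz] using h1
  have hcard : #Λ = beth ((k : Ordinal.{0}) + 1) := (card_LL_mul k).2
  have hinf : Infinite Λ := by
    rw [Cardinal.infinite_iff, hcard]; exact aleph0_le_beth _
  refine ⟨G, inferInstance, z, ?_, ?_, ?_, ?_, ?_⟩
  · rw [← hcard]
    apply le_antisymm
    · rw [← card_Idx Λ]
      exact Cardinal.mk_le_of_injective (f := fun g : G => (g : Idx Λ →₀ ℚ)) Subtype.val_injective
    · refine Cardinal.mk_le_of_injective (f := fun η : Λ =>
        (⟨yy (k + 1) tr a η 0, yy_mem (Set.mem_univ η) 0⟩ : G)) ?_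
      intro η ν h
      have h1 : (Finsupp.single (Idx.e η) 1 : Idx Λ →₀ ℚ) = Finsupp.single (Idx.e ν) 1 :=
        congrArg Subtype.val h
      have h2 := Finsupp.single_left_injective one_ne_zero h1
      injection h2
  · intro H hH
    have hex : ∀ h : H, ∃ F : Finset Λ, ((h : G) : Idx Λ →₀ ℚ) ∈ GM (k + 1) tr a (F : Set Λ) :=
      fun h => GM_fin h.1.2
    choose F hF using hex
    let M : Set Λ := ⋃ h : H, (F h : Set Λ)
    have hHk : #H ≤ ℵ_ (k : Ordinal.{0}) := by
      rw [← succ_aleph] at hH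
      exact Order.lt_succ_iff.1 hH
    have hM : #M ≤ ℵ_ (k : Ordinal.{0}) := by
      refine (mk_iUnion_le_sum_mk).trans ?_
      refine (Cardinal.sum_le_sum _ (fun _ => ℵ₀) (fun j => ?_)).trans ?_
      · exact Cardinal.le_aleph0_iff_set_countable.2 (F j).countable_toSet
      · rw [Cardinal.sum_const']
        exact Cardinal.mul_le_of_le (aleph0_le_aleph _) hHk (aleph0_le_aleph _)
    obtain ⟨ι, b, -, -⟩ := comb_LL k a M hM
    have : Module.Free ℤ (GM (k + 1) tr a M) := Module.Free.of_basis b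
    exact free_sub H (fun h => GM_mono (Set.subset_iUnion (fun h : H => (F h : Set Λ)) h) (hF h))
  · intro h
    have := hz 1 (by rw [h, smul_zero])
    omega
  · rintro n hn _ hx ⟨y, rfl⟩
    obtain ⟨c, hc⟩ := AddSubgroup.mem_zmultiples_iff.1 hx
    obtain ⟨F, hF⟩ := GM_fin y.2
    obtain ⟨ι, b, i, hi⟩ := comb_LL k a (F : Set Λ)
      ((Cardinal.le_aleph0_iff_set_countable.2 F.countable_toSet).trans (aleph0_le_aleph _))
    let y' : GM (k + 1) tr a (F : Set Λ) := ⟨y, hF⟩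
    have h1 : c • b i = n • y' := by
      apply Subtype.ext
      have h2 := congrArg Subtype.val hc
      simpa [hi, y', z] using h2
    have h3 := congrArg (fun g => b.repr g i) h1
    simp only [map_smul, map_nsmul, Finsupp.smul_apply, Module.Basis.repr_self,
      Finsupp.single_eq_same] at h3
    refine ⟨b.repr y' i • z, AddSubgroup.mem_zmultiples_iff.2 ⟨_, rfl⟩, ?_⟩
    rw [← hc]
    have h4 : c = n * b.repr y' i := by simpa using h3
    rw [h4, mul_smul, natCast_zsmul]
  · rintro ⟨H, hH⟩
    obtain ⟨f, hf⟩ := exists_proj z hz H hH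
    let X : ℕ → ℕ → Λ → G := fun l n t => ⟨xx l n t, xx_mem _ _ _ _⟩
    let Y : Λ → ℕ → G := fun η n => ⟨yy (k + 1) tr a η n, yy_mem (Set.mem_univ η) n⟩
    have hrel : ∀ η n, (3 : ℤ) • Y η (n + 1) =
        Y η n + ((∑ l ∈ Finset.range (k + 1), X l n (tr l n η)) + a η n • z) := by
      intro η n
      apply Subtype.ext
      have := yy_rel (K := k + 1) (tr := tr) (a := a) η n
      simpa [Y, X, z, ss] using this
    obtain ⟨η, hη⟩ := bb (k + 1) (fun l m t => f (X l m t))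
    apply no_seq (fun n => f (Y η n))
    intro n
    have h1 := congrArg f (hrel η n)
    rw [map_zsmul, map_add, map_add, map_zsmul, map_sum, hf] at h1
    rw [Finset.sum_congr rfl (fun l hl => hη l (Finset.mem_range.1 hl) n)] at h1
    simp only [a, smul_eq_mul, mul_one] at h1
    linarith
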